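/- Let τ ∈ S_n, let s_k be a simple transposition (1 ≤ k ≤ n−1), let X ∈ ℂ^n, and set T(R) = T_τ(X) and T(W) = T_{s_k∘τ}(s_k·X). Then w_{k,k} = r_{k,k} + r_{n,k+1} − r_{n,k} + M_k(τ) + A_τ(k+1,k), where the integers M_k(τ) and A_τ(k+1,k) are viewed in ℂ. -/

import Mathlib

/-- The orientation function `A_σ` of the graph `G_σ`:
`A_σ(r,s) = 1` if `σ⁻¹(r) > σ⁻¹(s)` and `A_σ(r,s) = -1` otherwise. -/
def Aperm (σ : Equiv.Perm ℕ) (r s : ℕ) : ℤ :=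
  if σ.symm s < σ.symm r then 1 else -1

/-- The Gelfand–Tsetlin tableau `T_σ(X)`: `tab n σ x k i` is the entry `y_{k,i}` in
row `k`, column `i`; row `n` is `x` and `y_{k-1,i} = y_{k,i} + (1 - A_σ(k,i))/2`. -/
noncomputable def tab (n : ℕ) (σ : Equiv.Perm ℕ) (x : ℕ → ℂ) (k i : ℕ) : ℂ :=
  if h : n ≤ k then x i
  else tab n σ x (k + 1) i + (1 - (Aperm σ (k + 1) i : ℂ)) / 2
termination_by n - k
decreasing_by omega

/-- `M_k(σ) = A_σ(k+1,k) · #{ℓ : k+2 ≤ ℓ ≤ n, A_σ(ℓ,k) ≠ A_σ(ℓ,k+1)}`. -/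
def Mk (n : ℕ) (σ : Equiv.Perm ℕ) (k : ℕ) : ℤ :=
  Aperm σ (k + 1) k *
    ((Finset.Icc (k + 2) n).filter (fun ℓ => Aperm σ ℓ k ≠ Aperm σ ℓ (k + 1))).card

/-! Two facts reduce everything to row `k + 1`. A permutation fixing all labels above `m` acts on
row `m` of the tableaux just by permuting columns, so `w_{k+1,k} = r_{k+1,k+1}`. And entries `k`,
`k + 1` of row `k + 1` differ by `x_{k+1} - x_k` plus half the sum of `A_τ(ℓ,k) - A_τ(ℓ,k+1)` over
`ℓ > k + 1`; since each nonzero term of that sum is `2 A_τ(k+1,k)`, half the sum is `M_k(τ)`. The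
step from row `k + 1` to row `k` contributes the remaining `A_τ(k+1,k)`, by antisymmetry of `A_τ`. -/

theorem Aperm_mul (ρ σ : Equiv.Perm ℕ) (r s : ℕ) :
    Aperm (ρ * σ) r s = Aperm σ (ρ.symm r) (ρ.symm s) :=
  rfl

theorem Aperm_eq_neg_of_ne (σ : Equiv.Perm ℕ) {r s : ℕ} (hrs : r ≠ s) :
    Aperm σ r s = -Aperm σ s r := by
  have hpos : σ.symm r ≠ σ.symm s := σ.symm.injective.ne hrs
  unfold Aperm
  split_ifs <;> omega

theorem Aperm_swap_mul (σ : Equiv.Perm ℕ) {r s : ℕ} (hrs : r ≠ s) :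
    Aperm (Equiv.swap s r * σ) r s = -Aperm σ r s := by
  rw [Aperm_mul, Equiv.symm_swap, Equiv.swap_apply_left, Equiv.swap_apply_right,
    Aperm_eq_neg_of_ne σ hrs.symm]

-- If `A_σ(ℓ,r) ≠ A_σ(ℓ,s)`, then `σ⁻¹(ℓ)` lies (weakly) between `σ⁻¹(r)` and `σ⁻¹(s)`, which
-- forces `A_σ(s,r) = A_σ(ℓ,r) = -A_σ(ℓ,s)`.
theorem Aperm_sub_Aperm (σ : Equiv.Perm ℕ) (ℓ r s : ℕ) :
    Aperm σ ℓ r - Aperm σ ℓ s =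
      2 * if Aperm σ ℓ r ≠ Aperm σ ℓ s then Aperm σ s r else 0 := by
  unfold Aperm
  split_ifs <;> omega

theorem two_mul_Mk (n : ℕ) (σ : Equiv.Perm ℕ) (k : ℕ) :
    2 * Mk n σ k = ∑ ℓ ∈ Finset.Ioc (k + 1) n, (Aperm σ ℓ k - Aperm σ ℓ (k + 1)) := by
  have hIoc : Finset.Icc (k + 2) n = Finset.Ioc (k + 1) n := Finset.Icc_add_one_left_eq_Ioc _ _
  simp only [Aperm_sub_Aperm, ← Finset.mul_sum, ← Finset.sum_filter, Finset.sum_const, nsmul_eq_mul]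
  rw [Mk, hIoc, mul_comm (Aperm σ (k + 1) k)]

theorem tab_of_le {n k : ℕ} (hnk : n ≤ k) (σ : Equiv.Perm ℕ) (x : ℕ → ℂ) (i : ℕ) :
    tab n σ x k i = x i := by
  rw [tab, dif_pos hnk]

theorem tab_of_lt {n k : ℕ} (hkn : k < n) (σ : Equiv.Perm ℕ) (x : ℕ → ℂ) (i : ℕ) :
    tab n σ x k i = tab n σ x (k + 1) i + (1 - (Aperm σ (k + 1) i : ℂ)) / 2 := by
  rw [tab, dif_neg hkn.not_ge]

theorem tab_eq_add_sum (n : ℕ) (σ : Equiv.Perm ℕ) (x : ℕ → ℂ) (k i : ℕ) :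
    tab n σ x k i = x i + ∑ ℓ ∈ Finset.Ioc k n, (1 - (Aperm σ ℓ i : ℂ)) / 2 := by
  fun_induction tab n σ x k i with
  | case1 k hnk => rw [Finset.Ioc_eq_empty_of_le hnk, Finset.sum_empty, add_zero]
  | case2 k hnk ih =>
    have hkn : k + 1 ≤ n := not_le.mp hnk
    rw [ih, ← Finset.Icc_add_one_left_eq_Ioc k, ← Finset.sum_Ioc_add_eq_sum_Icc hkn, add_assoc]

theorem tab_mul_of_fixed_above {n m : ℕ} {ρ : Equiv.Perm ℕ}
    (hρ : ∀ ℓ ∈ Finset.Ioc m n, ρ ℓ = ℓ) (σ : Equiv.Perm ℕ) (x : ℕ → ℂ) (i : ℕ) :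
    tab n (ρ * σ) (x ∘ ρ.symm) m i = tab n σ x m (ρ.symm i) := by
  have hA : ∀ ℓ ∈ Finset.Ioc m n, Aperm (ρ * σ) ℓ i = Aperm σ ℓ (ρ.symm i) := fun ℓ hℓ => by
    rw [Aperm_mul, ρ.symm_apply_eq.mpr (hρ ℓ hℓ).symm]
  rw [tab_eq_add_sum, tab_eq_add_sum, Function.comp_apply]
  exact congrArg _ (Finset.sum_congr rfl fun ℓ hℓ => by rw [hA ℓ hℓ])

theorem tab_sub_tab (n : ℕ) (σ : Equiv.Perm ℕ) (x : ℕ → ℂ) (m i j : ℕ) :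
    tab n σ x m j - tab n σ x m i =
      x j - x i + (∑ ℓ ∈ Finset.Ioc m n, ((Aperm σ ℓ i : ℂ) - Aperm σ ℓ j)) / 2 := by
  rw [tab_eq_add_sum, tab_eq_add_sum, add_sub_add_comm, ← Finset.sum_sub_distrib, Finset.sum_div]
  exact congrArg _ (Finset.sum_congr rfl fun ℓ _ => by ring)

theorem tab_succ_sub_tab_succ (n : ℕ) (σ : Equiv.Perm ℕ) (x : ℕ → ℂ) (k : ℕ) :
    tab n σ x (k + 1) (k + 1) - tab n σ x (k + 1) k = x (k + 1) - x k + (Mk n σ k : ℂ) := by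
  have hM : 2 * (Mk n σ k : ℂ) =
      ∑ ℓ ∈ Finset.Ioc (k + 1) n, ((Aperm σ ℓ k : ℂ) - Aperm σ ℓ (k + 1)) := by
    exact_mod_cast two_mul_Mk n σ k
  rw [tab_sub_tab, ← hM, mul_div_cancel_left₀ _ two_ne_zero]

theorem tab_swap_mul_succ (n : ℕ) (σ : Equiv.Perm ℕ) (x : ℕ → ℂ) (k : ℕ) :
    tab n (Equiv.swap k (k + 1) * σ) (x ∘ Equiv.swap k (k + 1)) (k + 1) k =
      tab n σ x (k + 1) (k + 1) := by
  have hfix : ∀ ℓ ∈ Finset.Ioc (k + 1) n, Equiv.swap k (k + 1) ℓ = ℓ := fun ℓ hℓ => by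
    have hlt : k + 1 < ℓ := (Finset.mem_Ioc.mp hℓ).1
    exact Equiv.swap_apply_of_ne_of_ne (by omega) hlt.ne'
  simpa only [Equiv.symm_swap, Equiv.swap_apply_left] using tab_mul_of_fixed_above hfix σ x k

theorem stmt19_general {n k : ℕ} (hkn : k < n) (τ : Equiv.Perm ℕ) (x : ℕ → ℂ) :
    tab n (Equiv.swap k (k + 1) * τ) (x ∘ Equiv.swap k (k + 1)) k k =
      tab n τ x k k + tab n τ x n (k + 1) - tab n τ x n k +
        (Mk n τ k : ℂ) + (Aperm τ (k + 1) k : ℂ) := by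
  have hdiff := tab_succ_sub_tab_succ n τ x k
  rw [tab_of_lt hkn, tab_of_lt hkn τ, tab_swap_mul_succ, Aperm_swap_mul τ k.succ_ne_self,
    tab_of_le le_rfl, tab_of_le le_rfl, Int.cast_neg]
  linear_combination hdiff

/-- with `T(R) = T_τ(X)` and `T(W) = T_{s_k ∘ τ}(s_k · X)`,
`w_{k,k} = r_{k,k} + r_{n,k+1} - r_{n,k} + M_k(τ) + A_τ(k+1,k)`. -/
theorem stmt19 (n : ℕ) (hn : 2 ≤ n) (τ : Equiv.Perm ℕ)
    (hτ : ∀ i ∉ Set.Icc 1 n, τ i = i) (k : ℕ) (hk1 : 1 ≤ k) (hk2 : k ≤ n - 1)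
    (x : ℕ → ℂ) :
    tab n (Equiv.swap k (k + 1) * τ) (fun m => x (Equiv.swap k (k + 1) m)) k k =
      tab n τ x k k + tab n τ x n (k + 1) - tab n τ x n k +
        (Mk n τ k : ℂ) + (Aperm τ (k + 1) k : ℂ) :=
  stmt19_general (by omega) τ x
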